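/- For every F ∈ 𝒜 and K ∈ 𝒜_ℒ⁰: P^fd_*(F|K) := inf{P̃(F|K) : P̃ ∈ 𝒫^fd} equals 1 if F ∩ K = K; if F ∩ K ≠ K, then P^fd_*(F|K) = C∫ σ(F|H_i) π^p_*(dH_i|K) (Choquet integral with respect to the capacity π^p_*(·|K) on 𝒜_ℒ), and this value equals (∫ σ(F∩K|H_i) π(dH_i))/π(K) when π(K) > 0 and equals inf{σ(F|H_i) : H_i ∈ ℒ, H_i ⊆ K} when π(K) = 0. -/

import Mathlib

/-!
Everything rests on one existence result, `exists_conglomerable_fcp`: for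
each atom `H i₀` there is a full conditional probability on `𝒜` which extends prior and strategy,
is strongly conglomerable along the partition (`IsMix`), and satisfies `P F K = σ F i₀` for every
`π`-null `K ∈ 𝒜L` containing `H i₀`. It is an ultralimit of the conditionals of strictly positive
mass functions built in layers of rapidly decreasing weight: a finite mixture of the strategy
matching `π` on finitely many events, then `σ(·|H i₀)`, then a finite sum of the `σ(·|H i)`, then
a counting measure. Conglomerability passes to the limit because the last layer is negligible on
events of `𝒜L`.

Since `σ F` is `𝒜L`-continuous, it has small oscillation on the members of a suitable finite
partition (`exists_fine_partition`); hence a number between all lower and all upper sums is the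
Stieltjes integral (`eq_lowerSInt`). This shows that a conglomerable probability is disintegrable
(`IsMix.eq_lowerSInt`) and that the Choquet integral with respect to an additive capacity is the
Stieltjes integral (`choquetInt_eq_lowerSInt`).

If `π K > 0`, condition (C3) determines both `P B K` for `B ∈ 𝒜L` and, by disintegrability on
`Ω`, `P F K`, so the envelopes are attained by every element and both integrals coincide.
If `π K = 0`, disintegrability bounds `P F K` below by the infimum of `σ F` over the atoms in `K`,
and varying `i₀` shows that this bound is sharp; in the same way the envelope on `𝒜L` is the
vacuous capacity, equal to `1` exactly on the events containing `K`, whose Choquet integral is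
that infimum.
-/

open Set

open scoped Classical

variable {Ω : Type*}

/-- A field of sets on `Ω`: contains `univ`, closed under complements and finite unions. -/
def IsSetField (𝒜 : Set (Set Ω)) : Prop :=
  Set.univ ∈ 𝒜 ∧ (∀ A ∈ 𝒜, Aᶜ ∈ 𝒜) ∧ ∀ A ∈ 𝒜, ∀ B ∈ 𝒜, A ∪ B ∈ 𝒜

/-- A finitely additive probability on the field `𝒜`. -/
def IsFAP (𝒜 : Set (Set Ω)) (P : Set Ω → ℝ) : Prop :=
  (∀ A ∈ 𝒜, 0 ≤ P A ∧ P A ≤ 1) ∧ P Set.univ = 1 ∧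
    ∀ A ∈ 𝒜, ∀ B ∈ 𝒜, Disjoint A B → P (A ∪ B) = P A + P B

/-- A partition of `Ω` into nonempty pairwise disjoint pieces. -/
def IsPartition {ι : Type*} (H : ι → Set Ω) : Prop :=
  (∀ i, (H i).Nonempty) ∧ (Pairwise fun i j => Disjoint (H i) (H j)) ∧
    (⋃ i, H i) = Set.univ

/-- A field containing every member of the partition `H` and whose members are
unions of members of the partition. -/
def IsFieldOver {ι : Type*} (H : ι → Set Ω) (𝒜L : Set (Set Ω)) : Prop :=
  IsSetField 𝒜L ∧ (∀ i, H i ∈ 𝒜L) ∧ ∀ A ∈ 𝒜L, ∃ S : Set ι, A = ⋃ i ∈ S, H i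

/-- A field containing `𝒜L ∪ 𝒜E` whose members are unions of the atoms `H i ∩ E j`. -/
def IsJointField {ι κ : Type*} (H : ι → Set Ω) (E : κ → Set Ω)
    (𝒜L 𝒜E 𝒜 : Set (Set Ω)) : Prop :=
  IsSetField 𝒜 ∧ 𝒜L ⊆ 𝒜 ∧ 𝒜E ⊆ 𝒜 ∧
    ∀ A ∈ 𝒜, ∃ S : Set (ι × κ), A = ⋃ p ∈ S, H p.1 ∩ E p.2

/-- A strategy on `𝒜 × ℒ`: each `σ (·|H i)` is a finitely additive probability on `𝒜`
equal to `1` on events implied by `H i`. -/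
def IsStrategy {ι : Type*} (𝒜 : Set (Set Ω)) (H : ι → Set Ω) (σ : Set Ω → ι → ℝ) : Prop :=
  ∀ i, IsFAP 𝒜 (fun F => σ F i) ∧ ∀ F ∈ 𝒜, H i ⊆ F → σ F i = 1

/-- A full conditional probability on the field `𝒜` (conditions (C1), (C2), (C3)). -/
def IsFCP (𝒜 : Set (Set Ω)) (P : Set Ω → Set Ω → ℝ) : Prop :=
  (∀ E ∈ 𝒜, ∀ K ∈ 𝒜, K.Nonempty → P E K = P (E ∩ K) K) ∧
  (∀ K ∈ 𝒜, K.Nonempty → IsFAP 𝒜 fun E => P E K) ∧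
  ∀ E ∈ 𝒜, ∀ F ∈ 𝒜, ∀ K ∈ 𝒜, K.Nonempty → (E ∩ K).Nonempty →
    P (E ∩ F) K = P E K * P F (E ∩ K)

/-- `P` extends the prior `π` on `𝒜L` and the strategy `σ` on `𝒜 × ℒ`. -/
def ExtendsPriorStrategy {ι : Type*} (𝒜 𝒜L : Set (Set Ω)) (H : ι → Set Ω)
    (π : Set Ω → ℝ) (σ : Set Ω → ι → ℝ) (P : Set Ω → Set Ω → ℝ) : Prop :=
  (∀ B ∈ 𝒜L, P B Set.univ = π B) ∧ ∀ F ∈ 𝒜, ∀ i, P F (H i) = σ F i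

/-- The set `𝒫` of full conditional probabilities on `𝒜` extending `{π, σ}`. -/
def FCPSet {ι : Type*} (𝒜 𝒜L : Set (Set Ω)) (H : ι → Set Ω)
    (π : Set Ω → ℝ) (σ : Set Ω → ι → ℝ) : Set (Set Ω → Set Ω → ℝ) :=
  {P | IsFCP 𝒜 P ∧ ExtendsPriorStrategy 𝒜 𝒜L H π σ P}

/-- Lower envelope of a set of conditional probabilities at `F|K`. -/
noncomputable def lowEnv (Ps : Set (Set Ω → Set Ω → ℝ)) (F K : Set Ω) : ℝ :=
  sInf ((fun P => P F K) '' Ps)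

/-- Upper envelope of a set of conditional probabilities at `F|K`. -/
noncomputable def upEnv (Ps : Set (Set Ω → Set Ω → ℝ)) (F K : Set Ω) : ℝ :=
  sSup ((fun P => P F K) '' Ps)

/-- A finite partition of `Ω` contained in `𝒜L`. -/
def IsFinPart (𝒜L : Set (Set Ω)) (T : Finset (Set Ω)) : Prop :=
  (↑T : Set (Set Ω)) ⊆ 𝒜L ∧ (∀ A ∈ T, (A : Set Ω).Nonempty) ∧
    (∀ A ∈ T, ∀ B ∈ T, A ≠ B → Disjoint A B) ∧ ⋃₀ (↑T : Set (Set Ω)) = Set.univ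

/-- Lower Stieltjes integral of `X : ℒ → ℝ` with respect to `μ` on `𝒜L`. -/
noncomputable def lowerSInt {ι : Type*} (H : ι → Set Ω) (𝒜L : Set (Set Ω))
    (X : ι → ℝ) (μ : Set Ω → ℝ) : ℝ :=
  sSup {x | ∃ T : Finset (Set Ω), IsFinPart 𝒜L T ∧
    x = ∑ A ∈ T, sInf {y | ∃ i, H i ⊆ A ∧ y = X i} * μ A}

/-- Upper Stieltjes integral of `X : ℒ → ℝ` with respect to `μ` on `𝒜L`. -/
noncomputable def upperSInt {ι : Type*} (H : ι → Set Ω) (𝒜L : Set (Set Ω))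
    (X : ι → ℝ) (μ : Set Ω → ℝ) : ℝ :=
  sInf {x | ∃ T : Finset (Set Ω), IsFinPart 𝒜L T ∧
    x = ∑ A ∈ T, sSup {y | ∃ i, H i ⊆ A ∧ y = X i} * μ A}

/-- `𝒜L`-continuity of a bounded function `X : ℒ → ℝ`. -/
def ALContinuous {ι : Type*} (H : ι → Set Ω) (𝒜L : Set (Set Ω)) (X : ι → ℝ) : Prop :=
  (∃ M : ℝ, ∀ i, |X i| ≤ M) ∧ ∀ t : ℝ, ∀ ε > (0 : ℝ), ∃ A ∈ 𝒜L,
    (⋃ i ∈ {i | t + ε ≤ X i}, H i) ⊆ A ∧ A ⊆ ⋃ i ∈ {i | t ≤ X i}, H i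

/-- Countable additivity of `P` on the field `𝒜`. -/
def CountablyAdditiveOn (𝒜 : Set (Set Ω)) (P : Set Ω → ℝ) : Prop :=
  ∀ A : ℕ → Set Ω, (∀ n, A n ∈ 𝒜) → (Pairwise fun m n => Disjoint (A m) (A n)) →
    (⋃ n, A n) ∈ 𝒜 → HasSum (fun n => P (A n)) (P (⋃ n, A n))

/-- A (normalized) capacity on the field `𝒜`. -/
def IsCapacity (𝒜 : Set (Set Ω)) (φ : Set Ω → ℝ) : Prop :=
  φ ∅ = 0 ∧ φ Set.univ = 1 ∧ (∀ A ∈ 𝒜, 0 ≤ φ A ∧ φ A ≤ 1) ∧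
    ∀ A ∈ 𝒜, ∀ B ∈ 𝒜, A ⊆ B → φ A ≤ φ B

/-- Total monotonicity of a capacity `φ` on the field `𝒜`. -/
def TotallyMonotone (𝒜 : Set (Set Ω)) (φ : Set Ω → ℝ) : Prop :=
  ∀ n : ℕ, 2 ≤ n → ∀ A : Fin n → Set Ω, (∀ i, A i ∈ 𝒜) →
    ∑ s ∈ Finset.univ.powerset.filter (fun s : Finset (Fin n) => s.Nonempty),
      (-1 : ℝ) ^ (s.card - 1) * φ (⋂ i ∈ s, A i) ≤ φ (⋃ i, A i)

/-- Restriction of a conditional probability to the domain `𝒜 × ℬ⁰`, viewed as a point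
of the product space `ℝ^(𝒜 × ℬ⁰)`. -/
def restrictPairs (𝒜 ℬ : Set (Set Ω)) (Q : Set Ω → Set Ω → ℝ)
    (p : {p : Set Ω × Set Ω // p.1 ∈ 𝒜 ∧ p.2 ∈ ℬ ∧ p.2.Nonempty}) : ℝ :=
  Q p.val.1 p.val.2

/-- Restriction of a set function to the domain `𝒜`, viewed as a point of `ℝ^𝒜`. -/
def restrictDom (𝒜 : Set (Set Ω)) (μ : Set Ω → ℝ) (A : {A : Set Ω // A ∈ 𝒜}) : ℝ :=
  μ A.val

/-- The field of all unions of members of the partition `H`, i.e. `⟨ℒ⟩*`. -/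
def unionsOf {ι : Type*} (H : ι → Set Ω) : Set (Set Ω) :=
  {A | ∃ S : Set ι, A = ⋃ i ∈ S, H i}

/-- The set `𝒬^fd` of fully ℒ-disintegrable full conditional probabilities on `𝒜`
extending `{π, σ}`. -/
def QfdSet {ι : Type*} (𝒜 𝒜L : Set (Set Ω)) (H : ι → Set Ω)
    (π : Set Ω → ℝ) (σ : Set Ω → ι → ℝ) : Set (Set Ω → Set Ω → ℝ) :=
  {Q | IsFCP 𝒜 Q ∧ ExtendsPriorStrategy 𝒜 𝒜L H π σ Q ∧
    ∀ F ∈ 𝒜, ∀ K ∈ 𝒜L, K.Nonempty →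
      Q F K = lowerSInt H 𝒜L (fun i => σ F i) fun B => Q B K}

/-- The set `𝒬^fsc` of fully strongly ℒ-conglomerable full conditional probabilities
on `𝒜` extending `{π, σ}`. -/
def QfscSet {ι : Type*} (𝒜 𝒜L : Set (Set Ω)) (H : ι → Set Ω)
    (π : Set Ω → ℝ) (σ : Set Ω → ι → ℝ) : Set (Set Ω → Set Ω → ℝ) :=
  {Q | IsFCP 𝒜 Q ∧ ExtendsPriorStrategy 𝒜 𝒜L H π σ Q ∧
    ∀ F ∈ 𝒜, ∀ K ∈ 𝒜L, K.Nonempty → ∀ B ∈ 𝒜L, B.Nonempty → B ⊆ K →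
      Q B K * sInf {x | ∃ i, H i ⊆ B ∧ x = σ F i} ≤ Q (F ∩ B) K ∧
      Q (F ∩ B) K ≤ Q B K * sSup {x | ∃ i, H i ⊆ B ∧ x = σ F i}}

/-- The set `𝒫^sc` of strongly ℒ-conglomerable joint probabilities consistent with `{π, σ}`. -/
def PscSet {ι : Type*} (𝒜 𝒜L : Set (Set Ω)) (H : ι → Set Ω)
    (π : Set Ω → ℝ) (σ : Set Ω → ι → ℝ) : Set (Set Ω → ℝ) :=
  {μ | (∃ P ∈ FCPSet 𝒜 𝒜L H π σ, μ = fun F => P F Set.univ) ∧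
    ∀ F ∈ 𝒜, ∀ B ∈ 𝒜L, B.Nonempty →
      π B * sInf {x | ∃ i, H i ⊆ B ∧ x = σ F i} ≤ μ (F ∩ B) ∧
      μ (F ∩ B) ≤ π B * sSup {x | ∃ i, H i ⊆ B ∧ x = σ F i}}

/-- The set `𝒫^fd` of fully ℒ-disintegrable conditional probabilities on `𝒜 × 𝒜L⁰`
extending `{π, σ}`. -/
def PfdSet {ι : Type*} (𝒜 𝒜L : Set (Set Ω)) (H : ι → Set Ω)
    (π : Set Ω → ℝ) (σ : Set Ω → ι → ℝ) : Set (Set Ω → Set Ω → ℝ) :=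
  {P | (∀ E ∈ 𝒜, ∀ K ∈ 𝒜L, K.Nonempty → P E K = P (E ∩ K) K) ∧
    (∀ K ∈ 𝒜L, K.Nonempty → IsFAP 𝒜 fun E => P E K) ∧
    (∀ E ∈ 𝒜, ∀ F ∈ 𝒜, ∀ K ∈ 𝒜L, K.Nonempty → E ∩ K ∈ 𝒜L → (E ∩ K).Nonempty →
      P (E ∩ F) K = P E K * P F (E ∩ K)) ∧
    (∀ B ∈ 𝒜L, P B Set.univ = π B) ∧ (∀ F ∈ 𝒜, ∀ i, P F (H i) = σ F i) ∧
    ∀ F ∈ 𝒜, ∀ K ∈ 𝒜L, K.Nonempty →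
      P F K = lowerSInt H 𝒜L (fun i => σ F i) fun B => P B K}

/-- The Choquet integral `C∫ X dφ = ∫₀¹ φ₊((X ≥ t)) dt` of a `[0,1]`-valued `X : ℒ → ℝ`
with respect to a capacity `φ` on `𝒜L`, where `φ₊` is the inner extension of `φ`. -/
noncomputable def choquetInt {ι : Type*} (H : ι → Set Ω) (𝒜L : Set (Set Ω))
    (X : ι → ℝ) (φ : Set Ω → ℝ) : ℝ :=
  ∫ t in (0 : ℝ)..(1 : ℝ),
    sSup {y | ∃ B ∈ 𝒜L, B ⊆ (⋃ i ∈ {i | t ≤ X i}, H i) ∧ y = φ B}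

/-! ### Fields, finitely additive probabilities and finite partitions -/

section Fields

variable {𝒜 : Set (Set Ω)}

lemma IsSetField.univ_mem (h : IsSetField 𝒜) : Set.univ ∈ 𝒜 := h.1

lemma IsSetField.compl_mem (h : IsSetField 𝒜) {A : Set Ω} (hA : A ∈ 𝒜) : Aᶜ ∈ 𝒜 := h.2.1 A hA

lemma IsSetField.union_mem (h : IsSetField 𝒜) {A B : Set Ω} (hA : A ∈ 𝒜) (hB : B ∈ 𝒜) :
    A ∪ B ∈ 𝒜 := h.2.2 A hA B hB

lemma IsSetField.inter_mem (h : IsSetField 𝒜) {A B : Set Ω} (hA : A ∈ 𝒜) (hB : B ∈ 𝒜) :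
    A ∩ B ∈ 𝒜 := by
  have := h.compl_mem (h.union_mem (h.compl_mem hA) (h.compl_mem hB))
  rwa [Set.compl_union, compl_compl, compl_compl] at this

lemma IsSetField.empty_mem (h : IsSetField 𝒜) : (∅ : Set Ω) ∈ 𝒜 := by
  simpa using h.compl_mem h.univ_mem

lemma IsSetField.diff_mem (h : IsSetField 𝒜) {A B : Set Ω} (hA : A ∈ 𝒜) (hB : B ∈ 𝒜) :
    A \ B ∈ 𝒜 := by
  rw [Set.sdiff_eq]; exact h.inter_mem hA (h.compl_mem hB)

lemma IsSetField.sUnion_mem (h : IsSetField 𝒜) (T : Finset (Set Ω)) (hT : ∀ A ∈ T, A ∈ 𝒜) :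
    ⋃₀ (↑T : Set (Set Ω)) ∈ 𝒜 := by
  induction T using Finset.induction_on with
  | empty => simpa using h.empty_mem
  | insert a s ha ih =>
    rw [Finset.coe_insert, Set.sUnion_insert]
    exact h.union_mem (hT a (by simp)) (ih fun A hA => hT A (by simp [hA]))

/-- A nonnegative finitely additive set function on `𝒜`, not necessarily normalized. -/
def IsFinAdd (𝒜 : Set (Set Ω)) (m : Set Ω → ℝ) : Prop :=
  (∀ A ∈ 𝒜, 0 ≤ m A) ∧ ∀ A ∈ 𝒜, ∀ B ∈ 𝒜, Disjoint A B → m (A ∪ B) = m A + m B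

lemma IsFAP.isFinAdd {P : Set Ω → ℝ} (h : IsFAP 𝒜 P) : IsFinAdd 𝒜 P :=
  ⟨fun A hA => (h.1 A hA).1, h.2.2⟩

lemma IsFinAdd.empty {m : Set Ω → ℝ} (hf : IsSetField 𝒜) (h : IsFinAdd 𝒜 m) : m ∅ = 0 := by
  have := h.2 ∅ hf.empty_mem ∅ hf.empty_mem (by simp)
  rw [Set.union_empty] at this
  linarith

lemma IsFinAdd.inter_add_diff {m : Set Ω → ℝ} (hf : IsSetField 𝒜) (h : IsFinAdd 𝒜 m)
    {A B : Set Ω} (hA : A ∈ 𝒜) (hB : B ∈ 𝒜) : m A = m (A ∩ B) + m (A \ B) := by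
  rw [← h.2 _ (hf.inter_mem hA hB) _ (hf.diff_mem hA hB)
    (Set.disjoint_sdiff_right.mono_left Set.inter_subset_right), Set.inter_union_sdiff]

lemma IsFinAdd.mono {m : Set Ω → ℝ} (hf : IsSetField 𝒜) (h : IsFinAdd 𝒜 m)
    {A B : Set Ω} (hA : A ∈ 𝒜) (hB : B ∈ 𝒜) (hAB : A ⊆ B) : m A ≤ m B := by
  rw [h.inter_add_diff hf hB hA, Set.inter_eq_right.2 hAB]
  linarith [h.1 _ (hf.diff_mem hB hA)]

lemma IsFinAdd.sum_inter {m : Set Ω → ℝ} (hf : IsSetField 𝒜) (h : IsFinAdd 𝒜 m)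
    {B : Set Ω} (hB : B ∈ 𝒜) (T : Finset (Set Ω)) (hT : ∀ A ∈ T, A ∈ 𝒜)
    (hd : ∀ A ∈ T, ∀ B ∈ T, A ≠ B → Disjoint A B) :
    m (B ∩ ⋃₀ (↑T : Set (Set Ω))) = ∑ A ∈ T, m (B ∩ A) := by
  induction T using Finset.induction_on with
  | empty => simpa using h.empty hf
  | insert a s ha ih =>
    have hs : ∀ A ∈ s, A ∈ 𝒜 := fun A hA => hT A (by simp [hA])
    rw [Finset.coe_insert, Set.sUnion_insert, Set.inter_union_distrib_left,
      h.2 _ (hf.inter_mem hB (hT a (by simp))) _ (hf.inter_mem hB (hf.sUnion_mem s hs)),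
      Finset.sum_insert ha,
      ih hs fun A hA B hB => hd A (by simp [hA]) B (by simp [hB])]
    refine Disjoint.mono Set.inter_subset_right Set.inter_subset_right ?_
    rw [Set.disjoint_sUnion_right]
    intro A hA
    exact hd a (by simp) A (by simp [Finset.mem_coe.1 hA]) fun e => ha (e ▸ Finset.mem_coe.1 hA)

lemma IsFinPart.sum_inter {m : Set Ω → ℝ} {𝒜L : Set (Set Ω)} (hf : IsSetField 𝒜)
    (h : IsFinAdd 𝒜 m) (hsub : 𝒜L ⊆ 𝒜) {T : Finset (Set Ω)} (hT : IsFinPart 𝒜L T)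
    {B : Set Ω} (hB : B ∈ 𝒜) : m B = ∑ A ∈ T, m (B ∩ A) := by
  rw [← h.sum_inter hf hB T (fun A hA => hsub (hT.1 hA)) hT.2.2.1, hT.2.2.2, Set.inter_univ]

lemma IsFinPart.sum_eq_one {m : Set Ω → ℝ} (hf : IsSetField 𝒜)
    (h : IsFAP 𝒜 m) {T : Finset (Set Ω)} (hT : IsFinPart 𝒜 T) : ∑ A ∈ T, m A = 1 := by
  rw [← h.2.1, hT.sum_inter hf h.isFinAdd subset_rfl hf.univ_mem]
  simp

/-- Finitely many members of a field are jointly refined by a finite partition in the field. -/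
lemma exists_finPart [Nonempty Ω] (hf : IsSetField 𝒜) (𝒢 : Finset (Set Ω)) (h𝒢 : ∀ G ∈ 𝒢, G ∈ 𝒜) :
    ∃ T, IsFinPart 𝒜 T ∧ ∀ G ∈ 𝒢, ∀ A ∈ T, A ⊆ G ∨ Disjoint A G := by
  induction 𝒢 using Finset.induction_on with
  | empty =>
    refine ⟨{Set.univ}, ⟨?_, ?_, ?_, ?_⟩, by simp⟩
    · simpa using hf.univ_mem
    · simp
    · simp +contextual
    · simp
  | insert a s ha ih =>
    obtain ⟨T, hT, hTs⟩ := ih fun G hG => h𝒢 G (by simp [hG])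
    have haA : a ∈ 𝒜 := h𝒢 a (by simp)
    refine ⟨((T.image fun A => A ∩ a) ∪ (T.image fun A => A \ a)).filter Set.Nonempty,
      ⟨?_, ?_, ?_, ?_⟩, ?_⟩
    · intro A hA
      simp only [Finset.coe_filter, Finset.mem_union, Finset.mem_image, Set.mem_ofPred_eq] at hA
      rcases hA with ⟨⟨B, hB, rfl⟩ | ⟨B, hB, rfl⟩, -⟩
      · exact hf.inter_mem (hT.1 hB) haA
      · exact hf.diff_mem (hT.1 hB) haA
    · intro A hA
      exact (Finset.mem_filter.1 hA).2
    · intro A hA B hB hAB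
      simp only [Finset.mem_filter, Finset.mem_union, Finset.mem_image] at hA hB
      rw [Set.disjoint_left]
      intro x hxA hxB
      have key : ∀ A' ∈ T, ∀ B' ∈ T, x ∈ A' → x ∈ B' → A' = B' := by
        intro A' hA' B' hB' h1 h2
        by_contra hne
        exact Set.disjoint_left.1 (hT.2.2.1 A' hA' B' hB' hne) h1 h2
      rcases hA with ⟨⟨A', hA', rfl⟩ | ⟨A', hA', rfl⟩, -⟩ <;>
        rcases hB with ⟨⟨B', hB', rfl⟩ | ⟨B', hB', rfl⟩, -⟩
      · exact hAB (by rw [key A' hA' B' hB' hxA.1 hxB.1])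
      · exact hxB.2 hxA.2
      · exact hxA.2 hxB.2
      · exact hAB (by rw [key A' hA' B' hB' hxA.1 hxB.1])
    · refine Set.eq_univ_of_forall fun x => ?_
      obtain ⟨A, hA, hx⟩ : x ∈ ⋃₀ (↑T : Set (Set Ω)) := by rw [hT.2.2.2]; trivial
      rw [Finset.mem_coe] at hA
      by_cases hxa : x ∈ a
      · exact ⟨A ∩ a, by simpa using ⟨Or.inl ⟨A, hA, rfl⟩, ⟨x, hx, hxa⟩⟩, hx, hxa⟩
      · exact ⟨A \ a, by simpa using ⟨Or.inr ⟨A, hA, rfl⟩, ⟨x, hx, hxa⟩⟩, hx, hxa⟩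
    · intro G hG A hA
      simp only [Finset.mem_filter, Finset.mem_union, Finset.mem_image] at hA
      rcases Finset.mem_insert.1 hG with rfl | hG
      · rcases hA with ⟨⟨A', hA', rfl⟩ | ⟨A', hA', rfl⟩, -⟩
        · exact Or.inl Set.inter_subset_right
        · exact Or.inr Set.disjoint_sdiff_left
      · rcases hA with ⟨⟨A', hA', rfl⟩ | ⟨A', hA', rfl⟩, -⟩
        · exact (hTs G hG A' hA').imp Set.inter_subset_left.trans
            (Disjoint.mono_left Set.inter_subset_left)
        · exact (hTs G hG A' hA').imp Set.sdiff_subset.trans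
            (Disjoint.mono_left Set.sdiff_subset)

end Fields

section Atoms

variable {ι : Type*} {H : ι → Set Ω} {𝒜L : Set (Set Ω)}

lemma subset_or_disjoint (hH : IsPartition H) (hL : IsFieldOver H 𝒜L) {B : Set Ω} (hB : B ∈ 𝒜L)
    (i : ι) : H i ⊆ B ∨ Disjoint (H i) B := by
  obtain ⟨S, rfl⟩ := hL.2.2 B hB
  by_cases hi : i ∈ S
  · exact Or.inl (Set.subset_biUnion_of_mem (u := H) hi)
  · right
    rw [Set.disjoint_iUnion₂_right]
    intro j hj
    exact hH.2.1 fun e => hi (e ▸ hj)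

lemma exists_atom_mem (hH : IsPartition H) (x : Ω) : ∃ i, x ∈ H i := by
  have : x ∈ ⋃ i, H i := by rw [hH.2.2]; trivial
  simpa using this

lemma subset_of_mem (hH : IsPartition H) (hL : IsFieldOver H 𝒜L) {B : Set Ω} (hB : B ∈ 𝒜L)
    {i : ι} {x : Ω} (hx : x ∈ H i) (hxB : x ∈ B) : H i ⊆ B :=
  (subset_or_disjoint hH hL hB i).resolve_right fun h => Set.disjoint_left.1 h hx hxB

lemma exists_atom_subset (hH : IsPartition H) (hL : IsFieldOver H 𝒜L) {B : Set Ω} (hB : B ∈ 𝒜L)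
    (hne : B.Nonempty) : ∃ i, H i ⊆ B := by
  obtain ⟨x, hx⟩ := hne
  obtain ⟨i, hi⟩ := exists_atom_mem hH x
  exact ⟨i, subset_of_mem hH hL hB hi hx⟩

lemma atom_subset_level (hH : IsPartition H) (X : ι → ℝ) (t : ℝ) (i : ι) :
    H i ⊆ (⋃ j ∈ {j | t ≤ X j}, H j) ↔ t ≤ X i := by
  constructor
  · intro h
    obtain ⟨x, hx⟩ := hH.1 i
    obtain ⟨j, hj, hxj⟩ : ∃ j, t ≤ X j ∧ x ∈ H j := by simpa using h hx
    have : i = j := by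
      by_contra hne
      exact Set.disjoint_left.1 (hH.2.1 hne) hx hxj
    rwa [this]
  · intro h
    exact Set.subset_biUnion_of_mem (u := H) (show i ∈ {j | t ≤ X j} from h)

/-- A `[0,1]`-valued `𝒜L`-continuous function has small oscillation on the members of a
suitable finite partition in `𝒜L`: refine sets `D k` squeezed between consecutive level sets
of height `k / N`. -/
lemma exists_fine_partition [Nonempty Ω] (hH : IsPartition H) (hL : IsFieldOver H 𝒜L) {X : ι → ℝ}
    (hX : ∀ i, 0 ≤ X i ∧ X i ≤ 1) (hc : ALContinuous H 𝒜L X) {δ : ℝ} (hδ : 0 < δ) :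
    ∃ T, IsFinPart 𝒜L T ∧ ∀ A ∈ T, ∀ i j, H i ⊆ A → H j ⊆ A → X i ≤ X j + δ := by
  obtain ⟨n, hn⟩ := exists_nat_one_div_lt (half_pos hδ)
  have hN : (0 : ℝ) < n + 1 := by positivity
  choose D hD using fun k : ℕ => hc.2 (k / (n + 1)) (1 / (n + 1)) (by positivity)
  obtain ⟨T, hT, hTD⟩ := exists_finPart hL.1 ((Finset.range (n + 1)).image D) (by
    intro G hG
    obtain ⟨k, -, rfl⟩ := Finset.mem_image.1 hG
    exact (hD k).1)
  refine ⟨T, hT, fun A hA i j hi hj => ?_⟩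
  have hfl : (⌊X i * (n + 1)⌋₊ : ℝ) ≤ X i * (n + 1) :=
    Nat.floor_le (mul_nonneg (hX i).1 hN.le)
  have hfl' : X i * (n + 1) < ⌊X i * (n + 1)⌋₊ + 1 := Nat.lt_floor_add_one _
  have hδ' : 2 < δ * (n + 1) := by
    rw [div_lt_div_iff₀ hN two_pos] at hn; linarith
  by_contra hlt
  push Not at hlt
  have hlt' : X j * (n + 1) + δ * (n + 1) < X i * (n + 1) := by
    have := mul_lt_mul_of_pos_right hlt hN
    linarith [add_mul (X j) δ (n + 1 : ℝ)]
  obtain ⟨k, hk⟩ : ∃ k, ⌊X i * (n + 1)⌋₊ = k + 1 := by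
    refine Nat.exists_eq_succ_of_ne_zero fun h0 => ?_
    rw [h0] at hfl'
    have := mul_nonneg (hX j).1 hN.le
    push_cast at hfl'
    linarith
  rw [hk] at hfl hfl'
  push_cast at hfl hfl'
  have hkn : k < n + 1 := by
    have h1 : (k : ℝ) + 1 ≤ n + 1 := by nlinarith [(hX i).2]
    have h2 : (k : ℝ) ≤ n := by linarith
    have : k ≤ n := by exact_mod_cast h2
    omega
  have hiD : H i ⊆ D k := by
    refine Set.Subset.trans ?_ (hD k).2.1
    rw [atom_subset_level hH, ← add_div, div_le_iff₀ hN]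
    exact hfl
  have hAD : A ⊆ D k := by
    refine (hTD (D k) (Finset.mem_image_of_mem _ (Finset.mem_range.2 hkn)) A hA).resolve_right ?_
    intro hdis
    obtain ⟨x, hx⟩ := hH.1 i
    exact Set.disjoint_left.1 hdis (hi hx) (hiD hx)
  have hjD := (atom_subset_level hH X _ j).1 ((hj.trans hAD).trans (hD k).2.2)
  rw [div_le_iff₀ hN] at hjD
  linarith

end Atoms

/-! ### Stieltjes and Choquet integrals -/

section Integrals

variable {ι : Type*} {H : ι → Set Ω} {𝒜L : Set (Set Ω)}

lemma sInf_atoms_bounds (hH : IsPartition H) (hL : IsFieldOver H 𝒜L) {X : ι → ℝ}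
    (hX : ∀ i, 0 ≤ X i ∧ X i ≤ 1) {A : Set Ω} (hA : A ∈ 𝒜L) (hne : A.Nonempty) :
    0 ≤ sInf {y | ∃ i, H i ⊆ A ∧ y = X i} ∧ sInf {y | ∃ i, H i ⊆ A ∧ y = X i} ≤ 1 ∧
      ∀ i, H i ⊆ A → sInf {y | ∃ i, H i ⊆ A ∧ y = X i} ≤ X i := by
  have hb : BddBelow {y | ∃ i, H i ⊆ A ∧ y = X i} :=
    ⟨0, by rintro y ⟨i, -, rfl⟩; exact (hX i).1⟩
  have hle : ∀ i, H i ⊆ A → sInf {y | ∃ i, H i ⊆ A ∧ y = X i} ≤ X i :=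
    fun i hi => csInf_le hb ⟨i, hi, rfl⟩
  obtain ⟨i, hi⟩ := exists_atom_subset hH hL hA hne
  refine ⟨?_, (hle i hi).trans (hX i).2, hle⟩
  exact le_csInf ⟨_, i, hi, rfl⟩ (by rintro y ⟨j, -, rfl⟩; exact (hX j).1)

lemma lowerSum_le_lowerSInt (hH : IsPartition H) (hL : IsFieldOver H 𝒜L) {X : ι → ℝ}
    (hX : ∀ i, 0 ≤ X i ∧ X i ≤ 1) {μ : Set Ω → ℝ} (hμ : IsFAP 𝒜L μ) {T : Finset (Set Ω)}
    (hT : IsFinPart 𝒜L T) :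
    ∑ A ∈ T, sInf {y | ∃ i, H i ⊆ A ∧ y = X i} * μ A ≤ lowerSInt H 𝒜L X μ := by
  refine le_csSup ⟨1, ?_⟩ ⟨T, hT, rfl⟩
  rintro x ⟨T, hT, rfl⟩
  rw [← hT.sum_eq_one hL.1 hμ]
  refine Finset.sum_le_sum fun A hA => ?_
  have h1 := (sInf_atoms_bounds hH hL hX (hT.1 hA) (hT.2.1 A hA)).2.1
  have h2 := (hμ.1 A (hT.1 hA)).1
  nlinarith

lemma lowerSInt_congr {X : ι → ℝ} {μ ν : Set Ω → ℝ} (h : ∀ B ∈ 𝒜L, μ B = ν B) :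
    lowerSInt H 𝒜L X μ = lowerSInt H 𝒜L X ν := by
  unfold lowerSInt
  congr 1
  ext x
  refine exists_congr fun T => and_congr_right fun hT => ?_
  rw [Finset.sum_congr rfl fun A hA => by rw [h A (hT.1 hA)]]

/-- Any number lying above all lower sums and below all upper sums is the Stieltjes integral. -/
lemma eq_lowerSInt [Nonempty Ω] (hH : IsPartition H) (hL : IsFieldOver H 𝒜L) {X : ι → ℝ}
    (hX : ∀ i, 0 ≤ X i ∧ X i ≤ 1) (hc : ALContinuous H 𝒜L X) {μ : Set Ω → ℝ} (hμ : IsFAP 𝒜L μ)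
    {V : ℝ}
    (hlow : ∀ T, IsFinPart 𝒜L T → ∀ a : Set Ω → ℝ, (∀ A ∈ T, 0 ≤ a A ∧ a A ≤ 1) →
      (∀ A ∈ T, ∀ i, H i ⊆ A → a A ≤ X i) → ∑ A ∈ T, a A * μ A ≤ V)
    (hupp : ∀ T, IsFinPart 𝒜L T → ∀ a : Set Ω → ℝ, (∀ A ∈ T, 0 ≤ a A ∧ a A ≤ 1) →
      (∀ A ∈ T, ∀ i, H i ⊆ A → X i ≤ a A) → V ≤ ∑ A ∈ T, a A * μ A) :
    V = lowerSInt H 𝒜L X μ := by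
  apply le_antisymm
  · refine le_of_forall_pos_le_add fun δ hδ => ?_
    obtain ⟨T, hT, hosc⟩ := exists_fine_partition hH hL hX hc hδ
    set a : Set Ω → ℝ := fun A => sInf {y | ∃ i, H i ⊆ A ∧ y = X i} with ha
    have hab := fun A (hA : A ∈ T) => sInf_atoms_bounds hH hL hX (hT.1 hA) (hT.2.1 A hA)
    calc V ≤ ∑ A ∈ T, min (a A + δ) 1 * μ A := by
          refine hupp T hT _ (fun A hA => ⟨le_min ?_ zero_le_one, min_le_right _ _⟩) ?_
          · have := (hab A hA).1
            exact add_nonneg this hδ.le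
          · intro A hA i hi
            refine le_min ?_ (hX i).2
            rw [← sub_le_iff_le_add]
            refine le_csInf ⟨_, i, hi, rfl⟩ ?_
            rintro y ⟨j, hj, rfl⟩
            linarith [hosc A hA i j hi hj]
      _ ≤ ∑ A ∈ T, (a A * μ A + δ * μ A) := by
          refine Finset.sum_le_sum fun A hA => ?_
          rw [← add_mul]
          exact mul_le_mul_of_nonneg_right (min_le_left _ _) (hμ.1 A (hT.1 hA)).1
      _ ≤ lowerSInt H 𝒜L X μ + δ := by
          rw [Finset.sum_add_distrib, ← Finset.mul_sum, hT.sum_eq_one hL.1 hμ, mul_one]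
          linarith [lowerSum_le_lowerSInt hH hL hX hμ hT]
  · obtain ⟨T₀, hT₀, -⟩ := exists_finPart hL.1 ∅ (by simp)
    refine csSup_le ⟨_, T₀, hT₀, rfl⟩ ?_
    rintro x ⟨T, hT, rfl⟩
    have hab := fun A (hA : A ∈ T) => sInf_atoms_bounds hH hL hX (hT.1 hA) (hT.2.1 A hA)
    exact hlow T hT _ (fun A hA => ⟨(hab A hA).1, (hab A hA).2.1⟩) fun A hA => (hab A hA).2.2

lemma antitone_step (c : ℝ) : Antitone fun t : ℝ => if t ≤ c then (1 : ℝ) else 0 := by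
  intro s t hst
  dsimp only
  split_ifs with h1 h2 <;> first | exact absurd (hst.trans h1) h2 | norm_num

lemma integral_step {c : ℝ} (h0 : 0 ≤ c) (h1 : c ≤ 1) :
    ∫ t in (0 : ℝ)..1, (if t ≤ c then (1 : ℝ) else 0) = c := by
  have hi : ∀ a b, IntervalIntegrable (fun t : ℝ => if t ≤ c then (1 : ℝ) else 0)
      MeasureTheory.volume a b := fun a b => (antitone_step c).intervalIntegrable
  rw [← intervalIntegral.integral_add_adjacent_intervals (hi 0 c) (hi c 1),
    intervalIntegral.integral_congr_ae (g := fun _ => (1 : ℝ)),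
    intervalIntegral.integral_congr_ae (a := c) (g := fun _ => (0 : ℝ))]
  · simp
  · refine Filter.Eventually.of_forall fun t ht => ?_
    rw [Set.uIoc_of_le h1] at ht
    simp [ht.1]
  · refine Filter.Eventually.of_forall fun t ht => ?_
    rw [Set.uIoc_of_le h0] at ht
    simp [ht.2]

lemma choquetInt_congr {X : ι → ℝ} {μ ν : Set Ω → ℝ} (h : ∀ B ∈ 𝒜L, μ B = ν B) :
    choquetInt H 𝒜L X μ = choquetInt H 𝒜L X ν := by
  unfold choquetInt
  congr 1
  funext t
  congr 1
  ext y
  refine exists_congr fun B => and_congr_right fun hB => ?_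
  rw [h B hB]

/-- For an additive capacity the Choquet integral is the Stieltjes integral: the inner
measure of a level set is squeezed between step functions in `t` whose integrals are a lower
and an upper sum. -/
lemma choquetInt_eq_lowerSInt [Nonempty Ω] (hH : IsPartition H) (hL : IsFieldOver H 𝒜L)
    {X : ι → ℝ} (hX : ∀ i, 0 ≤ X i ∧ X i ≤ 1) (hc : ALContinuous H 𝒜L X) {μ : Set Ω → ℝ}
    (hμ : IsFAP 𝒜L μ) : choquetInt H 𝒜L X μ = lowerSInt H 𝒜L X μ := by
  set L : ℝ → Set Ω := fun t => ⋃ i ∈ {i | t ≤ X i}, H i with hLdef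
  set g : ℝ → ℝ := fun t => sSup {y | ∃ B ∈ 𝒜L, B ⊆ L t ∧ y = μ B} with hg
  have hbdd : ∀ t, BddAbove {y | ∃ B ∈ 𝒜L, B ⊆ L t ∧ y = μ B} := fun t =>
    ⟨1, by rintro y ⟨B, hB, -, rfl⟩; exact (hμ.1 B hB).2⟩
  have hne : ∀ t, {y | ∃ B ∈ 𝒜L, B ⊆ L t ∧ y = μ B}.Nonempty := fun t =>
    ⟨_, ∅, hL.1.empty_mem, Set.empty_subset _, rfl⟩
  have hanti : Antitone g := by
    intro s t hst
    refine csSup_le_csSup (hbdd s) (hne t) ?_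
    rintro y ⟨B, hB, hBt, rfl⟩
    refine ⟨B, hB, hBt.trans ?_, rfl⟩
    exact Set.biUnion_subset_biUnion_left fun i hi => hst.trans hi
  have hgi : IntervalIntegrable g MeasureTheory.volume 0 1 := hanti.intervalIntegrable
  have hsi : ∀ (T : Finset (Set Ω)) (a : Set Ω → ℝ), ∀ A ∈ T,
      IntervalIntegrable (fun t : ℝ => (if t ≤ a A then (1 : ℝ) else 0) * μ A)
        MeasureTheory.volume 0 1 :=
    fun T a A _ => (antitone_step (a A)).intervalIntegrable.mul_const _
  have hsum : ∀ (T : Finset (Set Ω)) (a : Set Ω → ℝ), (∀ A ∈ T, 0 ≤ a A ∧ a A ≤ 1) →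
      ∫ t in (0 : ℝ)..1, ∑ A ∈ T, (if t ≤ a A then (1 : ℝ) else 0) * μ A
        = ∑ A ∈ T, a A * μ A := by
    intro T a ha
    rw [intervalIntegral.integral_finsetSum (hsi T a)]
    refine Finset.sum_congr rfl fun A hA => ?_
    rw [intervalIntegral.integral_mul_const, integral_step (ha A hA).1 (ha A hA).2]
  have hsumi : ∀ (T : Finset (Set Ω)) (a : Set Ω → ℝ), IntervalIntegrable
      (fun t : ℝ => ∑ A ∈ T, (if t ≤ a A then (1 : ℝ) else 0) * μ A)
        MeasureTheory.volume 0 1 := by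
    intro T a
    have he : (fun t : ℝ => ∑ A ∈ T, (if t ≤ a A then (1 : ℝ) else 0) * μ A)
        = ∑ A ∈ T, fun t : ℝ => (if t ≤ a A then (1 : ℝ) else 0) * μ A := by
      funext t
      simp
    rw [he]
    exact IntervalIntegrable.sum T (hsi T a)
  change (∫ t in (0 : ℝ)..1, g t) = _
  refine eq_lowerSInt hH hL hX hc hμ ?_ ?_
  · intro T hT a ha haX
    rw [← hsum T a ha]
    refine intervalIntegral.integral_mono_on zero_le_one (hsumi T a) hgi fun t _ => ?_
    set T' := T.filter fun A => t ≤ a A with hT'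
    have hT'A : ∀ A ∈ T', A ∈ 𝒜L := fun A hA => hT.1 (Finset.mem_filter.1 hA).1
    have h1 := hμ.isFinAdd.sum_inter hL.1 hL.1.univ_mem T' hT'A fun A hA B hB =>
      hT.2.2.1 A (Finset.mem_filter.1 hA).1 B (Finset.mem_filter.1 hB).1
    simp only [Set.univ_inter] at h1
    have h2 : ∑ A ∈ T, (if t ≤ a A then (1 : ℝ) else 0) * μ A = μ (⋃₀ (↑T' : Set (Set Ω))) := by
      rw [h1, hT', Finset.sum_filter]
      refine Finset.sum_congr rfl fun A _ => ?_
      split_ifs <;> simp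
    rw [h2]
    refine le_csSup (hbdd t) ⟨_, hL.1.sUnion_mem T' hT'A, ?_, rfl⟩
    refine Set.sUnion_subset fun A hA x hx => ?_
    have hA' := Finset.mem_filter.1 (Finset.mem_coe.1 hA)
    obtain ⟨i, hi⟩ := exists_atom_mem hH x
    have hiA := subset_of_mem hH hL (hT.1 hA'.1) hi hx
    exact (atom_subset_level hH X t i).2 (hA'.2.trans (haX A hA'.1 i hiA)) hi
  · intro T hT a ha haX
    rw [← hsum T a ha]
    refine intervalIntegral.integral_mono_on zero_le_one hgi (hsumi T a) fun t _ => ?_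
    refine csSup_le (hne t) ?_
    rintro y ⟨B, hB, hBt, rfl⟩
    rw [hT.sum_inter hL.1 hμ.isFinAdd subset_rfl hB]
    refine Finset.sum_le_sum fun A hA => ?_
    split_ifs with hta
    · rw [one_mul]
      exact hμ.isFinAdd.mono hL.1 (hL.1.inter_mem hB (hT.1 hA)) (hT.1 hA) Set.inter_subset_right
    · have : B ∩ A = ∅ := by
        by_contra hBA
        obtain ⟨x, hxB, hxA⟩ := Set.nonempty_iff_ne_empty.2 hBA
        obtain ⟨i, hi⟩ := exists_atom_mem hH x
        have hiA := subset_of_mem hH hL (hT.1 hA) hi hxA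
        have hit := (atom_subset_level hH X t i).1 ((subset_of_mem hH hL hB hi hxB).trans hBt)
        exact hta (hit.trans (haX A hA i hiA))
      rw [this, hμ.isFinAdd.empty hL.1, zero_mul]

end Integrals

/-! ### Mixtures of the strategy -/

section Mixtures

variable {ι : Type*} {H : ι → Set Ω} {𝒜L 𝒜 : Set (Set Ω)} {σ : Set Ω → ι → ℝ}

lemma strategy_empty (hf : IsSetField 𝒜) (hσ : IsStrategy 𝒜 H σ) (i : ι) : σ ∅ i = 0 :=
  (hσ i).1.isFinAdd.empty hf

lemma strategy_univ (hσ : IsStrategy 𝒜 H σ) (i : ι) : σ Set.univ i = 1 := (hσ i).1.2.1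

lemma strategy_compl (hf : IsSetField 𝒜) (hσ : IsStrategy 𝒜 H σ) {F : Set Ω} (hF : F ∈ 𝒜)
    (i : ι) : σ Fᶜ i = 1 - σ F i := by
  have h := (hσ i).1.2.2 F hF Fᶜ (hf.compl_mem hF) disjoint_compl_right
  have h1 := (hσ i).1.2.1
  simp only [Set.union_compl_self] at h h1
  linarith

lemma strategy_eq_zero (hf : IsSetField 𝒜) (hσ : IsStrategy 𝒜 H σ) {F : Set Ω} (hF : F ∈ 𝒜)
    {i : ι} (hd : Disjoint (H i) F) : σ F i = 0 := by
  have h := strategy_compl hf hσ hF i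
  have h1 := (hσ i).2 Fᶜ (hf.compl_mem hF) (Set.subset_compl_iff_disjoint_right.2 hd)
  linarith

lemma strategy_inter_of_subset (hf : IsSetField 𝒜) (hσ : IsStrategy 𝒜 H σ) {F A : Set Ω}
    (hF : F ∈ 𝒜) (hA : A ∈ 𝒜) {i : ι} (hi : H i ⊆ A) : σ (F ∩ A) i = σ F i := by
  have h := (hσ i).1.isFinAdd.inter_add_diff hf hF hA
  have h1 := strategy_eq_zero hf hσ (hf.diff_mem hF hA) (i := i)
    (Set.disjoint_sdiff_right.mono_left hi)
  linarith

/-- A mixture of the strategy: a finitely additive set function `m` on `𝒜` such that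
`m (F ∩ A)` is at least `c * m A` whenever `σ F` is at least `c` on the atoms inside
`A ∈ 𝒜L`. -/
def IsMix (H : ι → Set Ω) (𝒜L 𝒜 : Set (Set Ω)) (σ : Set Ω → ι → ℝ) (m : Set Ω → ℝ) : Prop :=
  IsFinAdd 𝒜 m ∧ ∀ F ∈ 𝒜, ∀ A ∈ 𝒜L, ∀ c : ℝ, 0 ≤ c → (∀ i, H i ⊆ A → c ≤ σ F i) →
    c * m A ≤ m (F ∩ A)

lemma IsFinAdd.add {m n : Set Ω → ℝ} (hm : IsFinAdd 𝒜 m) (hn : IsFinAdd 𝒜 n) :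
    IsFinAdd 𝒜 fun F => m F + n F := by
  refine ⟨fun A hA => add_nonneg (hm.1 A hA) (hn.1 A hA), fun A hA B hB hd => ?_⟩
  dsimp only
  rw [hm.2 A hA B hB hd, hn.2 A hA B hB hd]
  ring

lemma IsFinAdd.smul {m : Set Ω → ℝ} {c : ℝ} (hc : 0 ≤ c) (hm : IsFinAdd 𝒜 m) :
    IsFinAdd 𝒜 fun F => c * m F := by
  refine ⟨fun A hA => mul_nonneg hc (hm.1 A hA), fun A hA B hB hd => ?_⟩
  dsimp only
  rw [hm.2 A hA B hB hd]
  ring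

lemma IsMix.add {m n : Set Ω → ℝ} (hm : IsMix H 𝒜L 𝒜 σ m) (hn : IsMix H 𝒜L 𝒜 σ n) :
    IsMix H 𝒜L 𝒜 σ fun F => m F + n F := by
  refine ⟨hm.1.add hn.1, fun F hF A hA c hc h => ?_⟩
  have h1 := hm.2 F hF A hA c hc h
  have h2 := hn.2 F hF A hA c hc h
  dsimp only
  linarith

lemma IsMix.smul {m : Set Ω → ℝ} {c : ℝ} (hc : 0 ≤ c) (hm : IsMix H 𝒜L 𝒜 σ m) :
    IsMix H 𝒜L 𝒜 σ fun F => c * m F := by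
  refine ⟨hm.1.smul hc, fun F hF A hA d hd h => ?_⟩
  have h1 := mul_le_mul_of_nonneg_left (hm.2 F hF A hA d hd h) hc
  dsimp only
  linarith

lemma isMix_zero : IsMix H 𝒜L 𝒜 σ fun _ => 0 := by
  refine ⟨⟨fun _ _ => le_rfl, fun _ _ _ _ _ => by simp⟩, fun _ _ _ _ _ _ _ => by simp⟩

lemma isMix_sum {α : Type*} (S : Finset α) {m : α → Set Ω → ℝ}
    (hm : ∀ a ∈ S, IsMix H 𝒜L 𝒜 σ (m a)) : IsMix H 𝒜L 𝒜 σ fun F => ∑ a ∈ S, m a F := by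
  induction S using Finset.induction_on with
  | empty => simpa using isMix_zero
  | insert a s ha ih =>
    simp only [Finset.sum_insert ha]
    exact (hm a (by simp)).add (ih fun b hb => hm b (by simp [hb]))

lemma isMix_strategy (hH : IsPartition H) (hL : IsFieldOver H 𝒜L) (hf : IsSetField 𝒜)
    (hsub : 𝒜L ⊆ 𝒜) (hσ : IsStrategy 𝒜 H σ) (i : ι) :
    IsMix H 𝒜L 𝒜 σ fun F => σ F i := by
  refine ⟨(hσ i).1.isFinAdd, fun F hF A hA c hc h => ?_⟩
  dsimp only
  rcases subset_or_disjoint hH hL hA i with hi | hi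
  · rw [strategy_inter_of_subset hf hσ hF (hsub hA) hi, (hσ i).2 A (hsub hA) hi, mul_one]
    exact h i hi
  · rw [strategy_eq_zero hf hσ (hsub hA) hi, mul_zero]
    exact ((hσ i).1.1 _ (hf.inter_mem hF (hsub hA))).1

/-- A mixture agreeing with the prior `π` on finitely many members of `𝒜L`. -/
lemma exists_mix_prior [Nonempty Ω] (hH : IsPartition H) (hL : IsFieldOver H 𝒜L)
    (hf : IsSetField 𝒜) (hsub : 𝒜L ⊆ 𝒜) (hσ : IsStrategy 𝒜 H σ) {π : Set Ω → ℝ}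
    (hπ : IsFAP 𝒜L π) (𝒢 : Finset (Set Ω)) :
    ∃ m, IsMix H 𝒜L 𝒜 σ m ∧ ∀ B ∈ 𝒢, B ∈ 𝒜L → m B = π B := by
  obtain ⟨T, hT, hT𝒢⟩ := exists_finPart hL.1 (𝒢.filter fun B => B ∈ 𝒜L) (by
    intro G hG
    exact (Finset.mem_filter.1 hG).2)
  have hr : ∀ A : Set Ω, ∃ i, A ∈ T → H i ⊆ A := by
    intro A
    by_cases hA : A ∈ T
    · obtain ⟨i, hi⟩ := exists_atom_subset hH hL (hT.1 hA) (hT.2.1 A hA)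
      exact ⟨i, fun _ => hi⟩
    · obtain ⟨i, -⟩ := exists_atom_mem hH (Classical.arbitrary Ω)
      exact ⟨i, fun h => absurd h hA⟩
  choose r hr using hr
  have key : ∀ B ∈ 𝒢.filter (fun B => B ∈ 𝒜L), B ∈ 𝒜L →
      ∑ A ∈ T, π A * σ B (r A) = π B := by
    intro B hB hBL
    rw [hT.sum_inter hL.1 hπ.isFinAdd subset_rfl hBL]
    refine Finset.sum_congr rfl fun A hA => ?_
    rcases hT𝒢 B hB A hA with h | h
    · rw [(hσ (r A)).2 B (hsub hBL) ((hr A hA).trans h), mul_one, Set.inter_eq_right.2 h]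
    · rw [strategy_eq_zero hf hσ (hsub hBL) (h.mono_left (hr A hA)), mul_zero,
        Set.disjoint_iff_inter_eq_empty.1 h.symm, hπ.isFinAdd.empty hL.1]
  refine ⟨fun F => ∑ A ∈ T, π A * σ F (r A), ?_, ?_⟩
  · exact isMix_sum T fun A hA =>
      (isMix_strategy hH hL hf hsub hσ (r A)).smul (hπ.1 A (hT.1 hA)).1
  · intro B hB hBL
    exact key B (by simp [hB, hBL]) hBL

/-- The number of points of `S` lying in `F`. -/
noncomputable def countOn (S : Finset Ω) (F : Set Ω) : ℝ := ∑ x ∈ S, if x ∈ F then 1 else 0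

lemma countOn_isFinAdd (S : Finset Ω) : IsFinAdd 𝒜 (countOn S) := by
  refine ⟨fun A _ => Finset.sum_nonneg fun x _ => by split_ifs <;> norm_num,
    fun A _ B _ hd => ?_⟩
  unfold countOn
  rw [← Finset.sum_add_distrib]
  refine Finset.sum_congr rfl fun x _ => ?_
  by_cases hA : x ∈ A
  · have hB : x ∉ B := Set.disjoint_left.1 hd hA
    simp [hA, hB]
  · simp [hA]

lemma countOn_le (S : Finset Ω) (F : Set Ω) : countOn S F ≤ S.card := by
  unfold countOn
  calc _ ≤ ∑ x ∈ S, (1 : ℝ) := Finset.sum_le_sum fun x _ => by split_ifs <;> norm_num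
    _ = S.card := by simp

lemma one_le_countOn {S : Finset Ω} {F : Set Ω} {x : Ω} (hS : x ∈ S) (hF : x ∈ F) :
    1 ≤ countOn S F := by
  have := Finset.single_le_sum (f := fun x => if x ∈ F then (1 : ℝ) else 0)
    (fun y _ => by split_ifs <;> norm_num) hS
  simpa [hF, countOn] using this

end Mixtures

/-! ### Existence of conglomerable full conditional probabilities -/

section Existence

/-- Conditionals of additive set functions, along an ultrafilter on which each nonempty event
eventually has positive mass, converge to a full conditional probability. -/
lemma exists_limit_fcp {α : Type*} {𝒜 : Set (Set Ω)} (hf : IsSetField 𝒜) (U : Ultrafilter α)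
    (m : α → Set Ω → ℝ) (hm : ∀ a, IsFinAdd 𝒜 (m a))
    (hpos : ∀ K ∈ 𝒜, K.Nonempty → ∀ᶠ a in U, 0 < m a K) :
    ∃ P : Set Ω → Set Ω → ℝ, IsFCP 𝒜 P ∧ ∀ F ∈ 𝒜, ∀ K ∈ 𝒜,
      Filter.Tendsto (fun a => m a (F ∩ K) / m a K) U (nhds (P F K)) := by
  have hex : ∀ F ∈ 𝒜, ∀ K ∈ 𝒜, ∃ x ∈ Set.Icc (0 : ℝ) 1,
      Filter.Tendsto (fun a => m a (F ∩ K) / m a K) U (nhds x) := by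
    intro F hF K hK
    refine isCompact_Icc.ultrafilter_le_nhds (U.map fun a => m a (F ∩ K) / m a K) ?_
    rw [Ultrafilter.coe_map, Filter.le_principal_iff, Filter.mem_map]
    refine Filter.univ_mem' fun a => ?_
    have h0 := (hm a).1 _ (hf.inter_mem hF hK)
    exact ⟨div_nonneg h0 ((hm a).1 K hK),
      div_le_one_of_le₀ ((hm a).mono hf (hf.inter_mem hF hK) hK Set.inter_subset_right)
        ((hm a).1 K hK)⟩
  let P : Set Ω → Set Ω → ℝ := fun F K => Filter.limUnder (U : Filter α) fun a => m a (F ∩ K) / m a K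
  have hP : ∀ F ∈ 𝒜, ∀ K ∈ 𝒜,
      Filter.Tendsto (fun a => m a (F ∩ K) / m a K) U (nhds (P F K)) := by
    intro F hF K hK
    obtain ⟨x, -, hx⟩ := hex F hF K hK
    exact tendsto_nhds_limUnder ⟨x, hx⟩
  refine ⟨P, ⟨?_, ?_, ?_⟩, hP⟩
  · intro E hE K hK _
    have := hP (E ∩ K) (hf.inter_mem hE hK) K hK
    rw [Set.inter_assoc, Set.inter_self] at this
    exact tendsto_nhds_unique (hP E hE K hK) this
  · intro K hK hKne
    refine ⟨?_, ?_, ?_⟩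
    · intro E hE
      obtain ⟨x, hx, hxl⟩ := hex E hE K hK
      have hxP : P E K = x := tendsto_nhds_unique (hP E hE K hK) hxl
      change 0 ≤ P E K ∧ P E K ≤ 1
      rw [hxP]
      exact hx
    · refine tendsto_nhds_unique (hP _ hf.univ_mem K hK) (tendsto_const_nhds.congr' ?_)
      filter_upwards [hpos K hK hKne] with a ha
      rw [Set.univ_inter, div_self ha.ne']
    · intro A hA B hB hd
      refine tendsto_nhds_unique (hP _ (hf.union_mem hA hB) K hK)
        (((hP A hA K hK).add (hP B hB K hK)).congr fun a => ?_)
      rw [Set.union_inter_distrib_right, (hm a).2 _ (hf.inter_mem hA hK) _ (hf.inter_mem hB hK)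
        (hd.mono Set.inter_subset_left Set.inter_subset_left), add_div]
  · intro E hE F hF K hK hKne hEK
    have hEKm := hf.inter_mem hE hK
    refine tendsto_nhds_unique (hP _ (hf.inter_mem hE hF) K hK)
      (((hP E hE K hK).mul (hP F hF _ hEKm)).congr' ?_)
    filter_upwards [hpos _ hEKm hEK] with a ha
    have : E ∩ F ∩ K = F ∩ (E ∩ K) := by
      rw [Set.inter_comm E F, Set.inter_assoc]
    rw [this]
    rw [div_mul_div_comm, mul_comm (m a K), mul_div_mul_left _ _ ha.ne']

variable {ι : Type*} {H : ι → Set Ω} {𝒜L 𝒜 : Set (Set Ω)} {σ : Set Ω → ι → ℝ}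

/-- A full conditional probability that conglomerates along the partition extends the
strategy: take the atom `H i` as conditioning event. -/
lemma strategy_of_conglomerable (hL : IsFieldOver H 𝒜L) (hH : IsPartition H)
    (hf : IsSetField 𝒜) (hsub : 𝒜L ⊆ 𝒜) (hσ : IsStrategy 𝒜 H σ) {P : Set Ω → Set Ω → ℝ}
    (hP : IsFCP 𝒜 P)
    (hcg : ∀ K ∈ 𝒜L, K.Nonempty → IsMix H 𝒜L 𝒜 σ fun F => P F K) {F : Set Ω} (hF : F ∈ 𝒜)
    (i : ι) : P F (H i) = σ F i := by
  have hHi := hL.2.1 i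
  have hone : P (H i) (H i) = 1 := by
    have h := hP.1 Set.univ hf.univ_mem (H i) (hsub hHi) (hH.1 i)
    rw [Set.univ_inter] at h
    rw [← h]
    exact (hP.2.1 (H i) (hsub hHi) (hH.1 i)).2.1
  have hle : ∀ G ∈ 𝒜, σ G i ≤ P G (H i) := by
    intro G hG
    have h := (hcg (H i) hHi (hH.1 i)).2 G hG (H i) hHi (σ G i) ((hσ i).1.1 G hG).1 (by
      intro j hj
      have : j = i := by
        by_contra hne
        obtain ⟨x, hx⟩ := hH.1 j
        exact Set.disjoint_left.1 (hH.2.1 hne) hx (hj hx)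
      rw [this])
    simp only [hone, mul_one] at h
    rwa [hP.1 G hG (H i) (hsub hHi) (hH.1 i)]
  refine le_antisymm ?_ (hle F hF)
  have h1 := hle Fᶜ (hf.compl_mem hF)
  rw [strategy_compl hf hσ hF] at h1
  have h2 := (hP.2.1 (H i) (hsub hHi) (hH.1 i)).2.2 F hF Fᶜ (hf.compl_mem hF) disjoint_compl_right
  have h3 := (hP.2.1 (H i) (hsub hHi) (hH.1 i)).2.1
  simp only [Set.union_compl_self] at h2 h3
  linarith

end Existence

section Existence

variable {ι : Type*} {H : ι → Set Ω} {𝒜L 𝒜 : Set (Set Ω)} {σ : Set Ω → ι → ℝ}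

/-- Existence of a full conditional probability on `𝒜` which extends the prior and the
strategy, conglomerates along the partition on every conditioning event `K ∈ 𝒜L`, and
concentrates on a prescribed atom `H i₀` inside each `π`-null event of `𝒜L` containing it.

It is an ultralimit of the conditionals of the strictly positive mass functions
`M + e * σ(·|H i₀) + e² * ∑ x ∈ S, σ(·|H (idx x)) + e⁴ * countOn S`, where the mixture `M`
agrees with `π` on a finite subfamily of `𝒜L`, the finite set `S ⊆ Ω` grows, and `e` and
`e * S.card` tend to `0`. The last layer gives mass to the events that are null under every
`σ(·|H i)`. -/
lemma exists_conglomerable_fcp [Nonempty Ω] (hH : IsPartition H) (hL : IsFieldOver H 𝒜L)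
    (hf : IsSetField 𝒜) (hsub : 𝒜L ⊆ 𝒜) (hσ : IsStrategy 𝒜 H σ) {π : Set Ω → ℝ}
    (hπ : IsFAP 𝒜L π) (i₀ : ι) :
    ∃ P : Set Ω → Set Ω → ℝ, IsFCP 𝒜 P ∧ ExtendsPriorStrategy 𝒜 𝒜L H π σ P ∧
      (∀ K ∈ 𝒜L, K.Nonempty → IsMix H 𝒜L 𝒜 σ fun F => P F K) ∧
      ∀ K ∈ 𝒜L, H i₀ ⊆ K → π K = 0 → ∀ F ∈ 𝒜, P F K = σ F i₀ := by
  choose idx hidx using exists_atom_mem hH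
  choose m₁ hm₁ hm₁π using exists_mix_prior hH hL hf hsub hσ hπ
  let α := Finset (Set Ω) × Finset Ω × ℕ
  let U : Ultrafilter α := Ultrafilter.of Filter.atTop
  have hev : ∀ a₀ : α, ∀ᶠ a in (U : Filter α), a₀ ≤ a := fun a₀ =>
    (Ultrafilter.of_le Filter.atTop) (Filter.eventually_ge_atTop a₀)
  let r : α → ℝ := fun a => 1 / ((a.2.2 : ℝ) + 1)
  let e : α → ℝ := fun a => 1 / (((a.2.2 : ℝ) + 1) * ((a.2.1.card : ℝ) + 1))
  have hr : Filter.Tendsto r U (nhds 0) := by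
    have h1 : Filter.Tendsto (fun a : α => a.2.2) U Filter.atTop :=
      Filter.tendsto_atTop.2 fun b => (hev (∅, ∅, b)).mono fun a ha => ha.2.2
    exact tendsto_one_div_add_atTop_nhds_zero_nat.comp h1
  have hr1 : ∀ a, r a ≤ 1 := fun a => by
    refine div_le_one_of_le₀ ?_ (by positivity)
    have : (0 : ℝ) ≤ a.2.2 := by positivity
    linarith
  have hr0 : ∀ a, 0 < r a := fun a => by positivity
  have he0 : ∀ a, 0 < e a := fun a => by positivity
  have hes : ∀ a, e a * a.2.1.card + e a = r a := fun a => by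
    have h1 : (a.2.2 : ℝ) + 1 ≠ 0 := by positivity
    have h2 : (a.2.1.card : ℝ) + 1 ≠ 0 := by positivity
    simp only [e, r]
    field_simp
  have hes' : ∀ a, e a * a.2.1.card ≤ r a := fun a => by linarith [hes a, he0 a]
  have her : ∀ a, e a ≤ r a := fun a => by
    have := mul_nonneg (he0 a).le (Nat.cast_nonneg a.2.1.card : (0 : ℝ) ≤ _)
    linarith [hes a]
  have he1 : ∀ a, e a ≤ 1 := fun a => (her a).trans (hr1 a)
  let s : α → Set Ω → ℝ := fun a F => ∑ x ∈ a.2.1, σ F (idx x)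
  let n : α → Set Ω → ℝ := fun a F => m₁ a.1 F + (e a * σ F i₀ + e a ^ 2 * s a F)
  let m : α → Set Ω → ℝ := fun a F => n a F + e a ^ 4 * countOn a.2.1 F
  have hsmix : ∀ a, IsMix H 𝒜L 𝒜 σ (s a) := fun a =>
    isMix_sum a.2.1 fun x _ => isMix_strategy hH hL hf hsub hσ (idx x)
  have hn : ∀ a, IsMix H 𝒜L 𝒜 σ (n a) := fun a =>
    (hm₁ a.1).add (((isMix_strategy hH hL hf hsub hσ i₀).smul (he0 a).le).add
      ((hsmix a).smul (pow_nonneg (he0 a).le 2)))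
  have hc : ∀ a, IsFinAdd 𝒜 fun F => e a ^ 4 * countOn a.2.1 F := fun a =>
    (countOn_isFinAdd a.2.1).smul (pow_nonneg (he0 a).le 4)
  have hm : ∀ a, IsFinAdd 𝒜 (m a) := fun a => (hn a).1.add (hc a)
  have hs0 : ∀ a, ∀ F ∈ 𝒜, 0 ≤ s a F := fun a => (hsmix a).1.1
  have hs1 : ∀ a, ∀ F ∈ 𝒜, s a F ≤ a.2.1.card := fun a F hF => by
    calc s a F ≤ ∑ x ∈ a.2.1, (1 : ℝ) := Finset.sum_le_sum fun x _ => ((hσ _).1.1 F hF).2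
      _ = a.2.1.card := by simp
  have hc0 : ∀ (a : α) (F : Set Ω), 0 ≤ countOn a.2.1 F := fun a F =>
    (countOn_isFinAdd (𝒜 := Set.univ) a.2.1).1 F trivial
  have hσ0 : ∀ F ∈ 𝒜, 0 ≤ σ F i₀ := fun F hF => ((hσ i₀).1.1 F hF).1
  -- the two lower layers are negligible with respect to `e`
  have htail : ∀ a, ∀ F ∈ 𝒜, 0 ≤ e a ^ 2 * s a F + e a ^ 4 * countOn a.2.1 F ∧
      e a ^ 2 * s a F + e a ^ 4 * countOn a.2.1 F ≤ e a * (2 * r a) := by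
    intro a F hF
    have h0 := (he0 a).le
    have h1 : e a * s a F ≤ r a :=
      (mul_le_mul_of_nonneg_left (hs1 a F hF) h0).trans (hes' a)
    have h2 : e a * countOn a.2.1 F ≤ r a :=
      (mul_le_mul_of_nonneg_left (countOn_le _ F) h0).trans (hes' a)
    have h3 : e a ^ 2 * (e a * countOn a.2.1 F) ≤ 1 * (e a * countOn a.2.1 F) :=
      mul_le_mul_of_nonneg_right (pow_le_one₀ h0 (he1 a)) (mul_nonneg h0 (hc0 a F))
    constructor
    · have := hs0 a F hF
      have := hc0 a F
      positivity
    · calc e a ^ 2 * s a F + e a ^ 4 * countOn a.2.1 F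
          = e a * (e a * s a F + e a ^ 2 * (e a * countOn a.2.1 F)) := by ring
        _ ≤ e a * (2 * r a) := mul_le_mul_of_nonneg_left (by linarith) h0
  have hpos : ∀ K ∈ 𝒜, K.Nonempty → ∀ᶠ a in (U : Filter α), 0 < m a K := by
    rintro K hK ⟨x, hx⟩
    filter_upwards [hev (∅, {x}, 0)] with a ha
    have h1 := one_le_countOn (ha.2.1 (by simp)) hx
    have h2 := (hn a).1.1 K hK
    have h3 : 0 < e a ^ 4 * countOn a.2.1 K := mul_pos (pow_pos (he0 a) 4) (by linarith)
    exact add_pos_of_nonneg_of_pos h2 h3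
  have hposL : ∀ K ∈ 𝒜L, K.Nonempty → ∀ᶠ a in (U : Filter α), e a ^ 2 ≤ m a K := by
    rintro K hK ⟨x, hx⟩
    filter_upwards [hev (∅, {x}, 0)] with a ha
    have hKA := hsub hK
    have h1 : 1 ≤ s a K := by
      have h := Finset.single_le_sum (f := fun x => σ K (idx x))
        (fun y _ => ((hσ (idx y)).1.1 K hKA).1) (ha.2.1 (Finset.mem_singleton_self x))
      have h' : σ K (idx x) = 1 := (hσ _).2 K hKA (subset_of_mem hH hL hK (hidx x) hx)
      simpa [h', s] using h
    have h2 := (hm₁ a.1).1.1 K hKA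
    have h3 := mul_nonneg (he0 a).le (hσ0 K hKA)
    have h4 := (hc a).1 K hKA
    have h5 := le_mul_of_one_le_right (pow_nonneg (he0 a).le 2) h1
    simp only [m, n]
    linarith
  obtain ⟨P, hP, hlim⟩ := exists_limit_fcp hf U m hm hpos
  have hmix : ∀ K ∈ 𝒜L, K.Nonempty → IsMix H 𝒜L 𝒜 σ fun F => P F K := by
    intro K hK hKne
    refine ⟨(hP.2.1 K (hsub hK) hKne).isFinAdd, fun F hF A hA c hc0' hcA => ?_⟩
    have hAA := hsub hA
    have hKA := hsub hK
    have hl1 : Filter.Tendsto (fun a => c * (m a (A ∩ K) / m a K) - c * r a) U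
        (nhds (c * P A K)) := by
      have := ((hlim A hAA K hKA).const_mul c).sub (hr.const_mul c)
      simpa using this
    refine le_of_tendsto_of_tendsto hl1 (hlim _ (hf.inter_mem hF hAA) K hKA) ?_
    filter_upwards [hposL K hK hKne, hpos K hKA hKne] with a ha ha'
    rw [le_div_iff₀ ha', Set.inter_assoc, sub_mul, mul_assoc c, div_mul_cancel₀ _ ha'.ne']
    have hAK : A ∩ K ∈ 𝒜L := hL.1.inter_mem hA hK
    have h1 := (hn a).2 F hF (A ∩ K) hAK c hc0' fun i hi =>
      hcA i (hi.trans Set.inter_subset_left)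
    have h2 := (hc a).1 _ (hf.inter_mem hF (hsub hAK))
    have h3 : e a ^ 4 * countOn a.2.1 (A ∩ K) ≤ r a * m a K := by
      have h0 := (he0 a).le
      have h4 : e a * countOn a.2.1 (A ∩ K) ≤ r a :=
        (mul_le_mul_of_nonneg_left (countOn_le _ _) h0).trans (hes' a)
      have h5 : e a ^ 3 ≤ m a K := (pow_le_pow_of_le_one h0 (he1 a) (by norm_num)).trans ha
      calc e a ^ 4 * countOn a.2.1 (A ∩ K) = e a ^ 3 * (e a * countOn a.2.1 (A ∩ K)) := by ring
        _ ≤ m a K * r a := mul_le_mul h5 h4 (mul_nonneg h0 (hc0 a _)) ha'.le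
        _ = r a * m a K := mul_comm _ _
    have h6 := mul_le_mul_of_nonneg_left h3 hc0'
    have h7 : m a (A ∩ K) = n a (A ∩ K) + e a ^ 4 * countOn a.2.1 (A ∩ K) := rfl
    have h8 : m a (F ∩ (A ∩ K)) = n a (F ∩ (A ∩ K)) + e a ^ 4 * countOn a.2.1 (F ∩ (A ∩ K)) :=
      rfl
    rw [h7, h8, mul_add]
    dsimp only at h2
    linarith
  refine ⟨P, hP, ⟨?_, ?_⟩, hmix, ?_⟩
  · have hmπ : ∀ B ∈ 𝒜L, Filter.Tendsto (fun a => m a B) U (nhds (π B)) := by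
      intro B hB
      have hu : Filter.Tendsto (fun a => π B + 3 * r a) U (nhds (π B)) := by
        simpa using tendsto_const_nhds.add (hr.const_mul 3)
      have hBe : ∀ᶠ a in (U : Filter α), π B ≤ m a B ∧ m a B ≤ π B + 3 * r a := by
        filter_upwards [hev ({B}, ∅, 0)] with a ha
        have h1 := hm₁π a.1 B (ha.1 (by simp)) hB
        have h2 := htail a B (hsub hB)
        have h3 := mul_nonneg (he0 a).le (hσ0 B (hsub hB))
        have h4 := mul_le_of_le_one_right (he0 a).le ((hσ i₀).1.1 B (hsub hB)).2
        have h5 := mul_le_mul_of_nonneg_right (he1 a) (hr0 a).le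
        have h6 := her a
        simp only [m, n]
        constructor <;> linarith
      exact tendsto_of_tendsto_of_tendsto_of_le_of_le' tendsto_const_nhds hu
        (hBe.mono fun a h => h.1) (hBe.mono fun a h => h.2)
    intro B hB
    refine tendsto_nhds_unique (hlim B (hsub hB) _ hf.univ_mem) ?_
    have := (hmπ B hB).div (hmπ _ hL.1.univ_mem) (by rw [hπ.2.1]; norm_num)
    rw [hπ.2.1, div_one] at this
    simp only [Set.inter_univ]
    exact this
  · intro F hF i
    exact strategy_of_conglomerable hL hH hf hsub hσ hP hmix hF i
  · intro K hK hi₀ hK0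
    have hKA := hsub hK
    have key : ∀ F ∈ 𝒜, Filter.Tendsto (fun a => m a (F ∩ K) / e a) U (nhds (σ F i₀)) := by
      intro F hF
      have hFK := hf.inter_mem hF hKA
      have hu : Filter.Tendsto (fun a => σ F i₀ + 2 * r a) U (nhds (σ F i₀)) := by
        simpa using tendsto_const_nhds.add (hr.const_mul 2)
      have hbe : ∀ᶠ a in (U : Filter α), σ F i₀ ≤ m a (F ∩ K) / e a ∧
          m a (F ∩ K) / e a ≤ σ F i₀ + 2 * r a := by
        filter_upwards [hev ({K}, ∅, 0)] with a ha
        have h1 := hm₁π a.1 K (ha.1 (by simp)) hK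
        have h2 := (hm₁ a.1).1.mono hf hFK hKA Set.inter_subset_right
        have h3 := (hm₁ a.1).1.1 _ hFK
        have h4 : m₁ a.1 (F ∩ K) = 0 := le_antisymm (by rwa [h1, hK0] at h2) h3
        have h5 := htail a _ hFK
        rw [le_div_iff₀ (he0 a), div_le_iff₀ (he0 a)]
        simp only [m, n, h4, strategy_inter_of_subset hf hσ hF hKA hi₀]
        constructor <;> linarith
      exact tendsto_of_tendsto_of_tendsto_of_le_of_le' tendsto_const_nhds hu
        (hbe.mono fun a h => h.1) (hbe.mono fun a h => h.2)
    intro F hF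
    refine tendsto_nhds_unique (hlim F hF K hKA) ?_
    have h1 := (key F hF).div (key _ hf.univ_mem) (by rw [strategy_univ hσ]; norm_num)
    rw [strategy_univ hσ, div_one] at h1
    refine h1.congr fun a => ?_
    change m a (F ∩ K) / e a / (m a (Set.univ ∩ K) / e a) = _
    rw [Set.univ_inter, div_div_div_cancel_right₀ (he0 a).ne']

/-- A conglomerable finitely additive probability is the Stieltjes integral of the strategy. -/
lemma IsMix.eq_lowerSInt [Nonempty Ω] (hH : IsPartition H) (hL : IsFieldOver H 𝒜L)
    (hf : IsSetField 𝒜) (hsub : 𝒜L ⊆ 𝒜) (hσ : IsStrategy 𝒜 H σ) {m : Set Ω → ℝ}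
    (hm : IsMix H 𝒜L 𝒜 σ m) (hp : IsFAP 𝒜 m) {F : Set Ω} (hF : F ∈ 𝒜)
    (hc : ALContinuous H 𝒜L fun i => σ F i) :
    m F = lowerSInt H 𝒜L (fun i => σ F i) m := by
  have hpL : IsFAP 𝒜L m := ⟨fun A hA => hp.1 A (hsub hA), hp.2.1,
    fun A hA B hB => hp.2.2 A (hsub hA) B (hsub hB)⟩
  refine _root_.eq_lowerSInt hH hL (fun i => (hσ i).1.1 F hF) hc hpL ?_ ?_
  · intro T hT a ha haX
    rw [hT.sum_inter hf hp.isFinAdd hsub hF]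
    exact Finset.sum_le_sum fun A hA => hm.2 F hF A (hT.1 hA) (a A) (ha A hA).1 (haX A hA)
  · intro T hT a ha haX
    rw [hT.sum_inter hf hp.isFinAdd hsub hF]
    refine Finset.sum_le_sum fun A hA => ?_
    have hAA := hsub (hT.1 hA)
    -- the upper bound is the lower bound for the complementary event
    have h1 := hm.2 Fᶜ (hf.compl_mem hF) A (hT.1 hA) (1 - a A) (by linarith [(ha A hA).2])
      fun i hi => by rw [strategy_compl hf hσ hF]; linarith [haX A hA i hi]
    have h2 := hp.isFinAdd.inter_add_diff hf hAA hF
    have h3 : A \ F = Fᶜ ∩ A := by rw [Set.sdiff_eq, Set.inter_comm]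
    rw [h3, Set.inter_comm A F] at h2
    linarith

end Existence

/-! ### Lower envelopes -/

section Envelopes

variable {ι : Type*} {H : ι → Set Ω} {𝒜L 𝒜 : Set (Set Ω)} {σ : Set Ω → ι → ℝ}

lemma mem_PfdSet [Nonempty Ω] (hH : IsPartition H) (hL : IsFieldOver H 𝒜L)
    (hf : IsSetField 𝒜) (hsub : 𝒜L ⊆ 𝒜) (hσ : IsStrategy 𝒜 H σ) {π : Set Ω → ℝ}
    (hcont : ∀ F ∈ 𝒜, ALContinuous H 𝒜L fun i => σ F i) {P : Set Ω → Set Ω → ℝ}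
    (hP : IsFCP 𝒜 P) (hext : ExtendsPriorStrategy 𝒜 𝒜L H π σ P)
    (hmix : ∀ K ∈ 𝒜L, K.Nonempty → IsMix H 𝒜L 𝒜 σ fun F => P F K) :
    P ∈ PfdSet 𝒜 𝒜L H π σ :=
  ⟨fun E hE K hK => hP.1 E hE K (hsub hK), fun K hK => hP.2.1 K (hsub hK),
    fun E hE F hF K hK hne _ => hP.2.2 E hE F hF K (hsub hK) hne, hext.1, hext.2,
    fun F hF K hK hKne => (hmix K hK hKne).eq_lowerSInt hH hL hf hsub hσ
      (hP.2.1 K (hsub hK) hKne) hF (hcont F hF)⟩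

lemma lowEnv_eq_of_forall {Ps : Set (Set Ω → Set Ω → ℝ)} {F K : Set Ω} {c : ℝ}
    (hne : Ps.Nonempty) (h : ∀ P ∈ Ps, P F K = c) : lowEnv Ps F K = c := by
  obtain ⟨P, hP⟩ := hne
  have : (fun P : Set Ω → Set Ω → ℝ => P F K) '' Ps = {c} := by
    ext x
    constructor
    · rintro ⟨Q, hQ, rfl⟩
      exact h Q hQ
    · rintro rfl
      exact ⟨P, hP, h P hP⟩
  rw [lowEnv, this, csInf_singleton]

lemma lowEnv_le {Ps : Set (Set Ω → Set Ω → ℝ)} {F K : Set Ω}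
    (h0 : ∀ P ∈ Ps, 0 ≤ P F K) {P : Set Ω → Set Ω → ℝ} (hP : P ∈ Ps) :
    lowEnv Ps F K ≤ P F K :=
  csInf_le ⟨0, by rintro x ⟨Q, hQ, rfl⟩; exact h0 Q hQ⟩ ⟨P, hP, rfl⟩

lemma le_lowEnv {Ps : Set (Set Ω → Set Ω → ℝ)} {F K : Set Ω} {c : ℝ}
    (hne : Ps.Nonempty) (h : ∀ P ∈ Ps, c ≤ P F K) : c ≤ lowEnv Ps F K :=
  le_csInf (hne.image _) (by rintro x ⟨Q, hQ, rfl⟩; exact h Q hQ)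

/-- The lower envelope of the extensions on a `π`-null event `K` is vacuous. -/
lemma lowEnv_FCPSet_null [Nonempty Ω] (hH : IsPartition H) (hL : IsFieldOver H 𝒜L)
    (hf : IsSetField 𝒜) (hsub : 𝒜L ⊆ 𝒜) (hσ : IsStrategy 𝒜 H σ) {π : Set Ω → ℝ}
    (hπ : IsFAP 𝒜L π) {B K : Set Ω} (hB : B ∈ 𝒜L) (hK : K ∈ 𝒜L) (hKne : K.Nonempty)
    (hK0 : π K = 0) : lowEnv (FCPSet 𝒜 𝒜L H π σ) B K = if K ⊆ B then 1 else 0 := by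
  have hKA := hsub hK
  have hBA := hsub hB
  split_ifs with hKB
  · obtain ⟨i₀, -⟩ := exists_atom_subset hH hL hK hKne
    obtain ⟨P, hP, hext, -⟩ := exists_conglomerable_fcp hH hL hf hsub hσ hπ i₀
    refine lowEnv_eq_of_forall ⟨P, hP, hext⟩ fun Q hQ => ?_
    have h1 := hQ.1.1 B hBA K hKA hKne
    have h2 := hQ.1.1 Set.univ hf.univ_mem K hKA hKne
    rw [Set.univ_inter] at h2
    rw [h1, Set.inter_eq_right.2 hKB, ← h2]
    exact (hQ.1.2.1 K hKA hKne).2.1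
  · have hne : (K \ B).Nonempty := Set.sdiff_nonempty.2 hKB
    obtain ⟨i₀, hi₀⟩ := exists_atom_subset hH hL (hL.1.diff_mem hK hB) hne
    obtain ⟨P, hP, hext, -, hnull⟩ := exists_conglomerable_fcp hH hL hf hsub hσ hπ i₀
    have h0 : ∀ Q ∈ FCPSet 𝒜 𝒜L H π σ, 0 ≤ Q B K := fun Q hQ =>
      ((hQ.1.2.1 K hKA hKne).1 B hBA).1
    refine le_antisymm ?_ (le_lowEnv ⟨P, hP, hext⟩ h0)
    refine (lowEnv_le h0 ⟨hP, hext⟩).trans ?_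
    rw [hnull K hK (hi₀.trans Set.sdiff_subset) hK0 B hBA]
    exact (strategy_eq_zero hf hσ hBA (Set.disjoint_sdiff_left.mono_left hi₀)).le

end Envelopes

/-- closed form of `P^fd_*(F|K)` for `K ∈ 𝒜L⁰`, as a Choquet integral of
`σ(F|·)` with respect to the totally monotone capacity `π^p_*(·|K)`. -/
theorem statement17 {Ω ι κ : Type*} [Nonempty Ω] (H : ι → Set Ω) (E : κ → Set Ω)
    (𝒜L 𝒜E 𝒜 : Set (Set Ω))
    (hH : IsPartition H) (hE : IsPartition E)
    (h𝒜L : IsFieldOver H 𝒜L) (h𝒜E : IsFieldOver E 𝒜E)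
    (h𝒜 : IsJointField H E 𝒜L 𝒜E 𝒜)
    (π : Set Ω → ℝ) (hπ : IsFAP 𝒜L π)
    (σ : Set Ω → ι → ℝ) (hσ : IsStrategy 𝒜 H σ)
    (hcont : ∀ F ∈ 𝒜, ALContinuous H 𝒜L fun i => σ F i)
    (F K : Set Ω) (hF : F ∈ 𝒜) (hK : K ∈ 𝒜L) (hKne : K.Nonempty) :
    (F ∩ K = K → lowEnv (PfdSet 𝒜 𝒜L H π σ) F K = 1) ∧
    (F ∩ K ≠ K →
      lowEnv (PfdSet 𝒜 𝒜L H π σ) F K =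
        choquetInt H 𝒜L (fun i => σ F i) (fun B => lowEnv (FCPSet 𝒜 𝒜L H π σ) B K) ∧
      (0 < π K → lowEnv (PfdSet 𝒜 𝒜L H π σ) F K =
        lowerSInt H 𝒜L (fun i => σ (F ∩ K) i) π / π K) ∧
      (π K = 0 → lowEnv (PfdSet 𝒜 𝒜L H π σ) F K =
        sInf {x | ∃ i, H i ⊆ K ∧ x = σ F i})) := by

  obtain ⟨hf, hsub, -, -⟩ := h𝒜
  have hKA := hsub hK
  have hX : ∀ i, 0 ≤ σ F i ∧ σ F i ≤ 1 := fun i => (hσ i).1.1 F hF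
  obtain ⟨i₁, hi₁⟩ := exists_atom_subset hH h𝒜L hK hKne
  obtain ⟨P, hP, hext, hmix, -⟩ := exists_conglomerable_fcp hH h𝒜L hf hsub hσ hπ i₁
  have hPfd : P ∈ PfdSet 𝒜 𝒜L H π σ := mem_PfdSet hH h𝒜L hf hsub hσ hcont hP hext hmix
  have hPK : IsFAP 𝒜 fun E => P E K := hP.2.1 K hKA hKne
  have hPKL : IsFAP 𝒜L fun E => P E K := ⟨fun A hA => hPK.1 A (hsub hA), hPK.2.1,
    fun A hA B hB => hPK.2.2 A (hsub hA) B (hsub hB)⟩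
  have hQ0 : ∀ Q ∈ PfdSet 𝒜 𝒜L H π σ, 0 ≤ Q F K := fun Q hQ =>
    ((hQ.2.1 K hK hKne).1 F hF).1
  have huniv : (Set.univ : Set Ω).Nonempty := Set.univ_nonempty
  -- the value on a conditioning event of positive prior probability
  have hval : 0 < π K → ∀ Q ∈ PfdSet 𝒜 𝒜L H π σ,
      Q F K = lowerSInt H 𝒜L (fun i => σ (F ∩ K) i) π / π K := by
    intro hpos Q hQ
    obtain ⟨-, -, h3, h4, -, h6⟩ := hQ
    have h7 := h3 K hKA F hF Set.univ h𝒜L.1.univ_mem huniv (by simpa using hK) (by simpa using hKne)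
    rw [Set.inter_univ, h4 K hK, Set.inter_comm K F,
      h6 (F ∩ K) (hf.inter_mem hF hKA) Set.univ h𝒜L.1.univ_mem huniv, lowerSInt_congr h4] at h7
    rw [h7, mul_div_cancel_left₀ _ hpos.ne']
  -- the value on a null conditioning event
  have hnullval : π K = 0 →
      lowEnv (PfdSet 𝒜 𝒜L H π σ) F K = sInf {x | ∃ i, H i ⊆ K ∧ x = σ F i} := by
    intro hK0
    apply le_antisymm
    · refine le_csInf ⟨_, i₁, hi₁, rfl⟩ ?_
      rintro x ⟨i, hi, rfl⟩
      obtain ⟨Q, hQ, hQext, hQmix, hQnull⟩ :=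
        exists_conglomerable_fcp hH h𝒜L hf hsub hσ hπ i
      rw [← hQnull K hK hi hK0 F hF]
      exact lowEnv_le hQ0 (mem_PfdSet hH h𝒜L hf hsub hσ hcont hQ hQext hQmix)
    · refine le_lowEnv ⟨P, hPfd⟩ fun Q hQ => ?_
      obtain ⟨h1, h2, -, -, -, h6⟩ := hQ
      have hQK : IsFAP 𝒜 fun E => Q E K := h2 K hK hKne
      have hQKL : IsFAP 𝒜L fun E => Q E K := ⟨fun A hA => hQK.1 A (hsub hA), hQK.2.1,
        fun A hA B hB => hQK.2.2 A (hsub hA) B (hsub hB)⟩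
      have hKne' : K ≠ Kᶜ := by
        intro h
        obtain ⟨x, hx⟩ := hKne
        exact (h ▸ hx : x ∈ Kᶜ) hx
      have hKc : Kᶜ.Nonempty := by
        rw [Set.nonempty_compl]
        rintro rfl
        rw [hπ.2.1] at hK0
        exact one_ne_zero hK0
      have hT : IsFinPart 𝒜L {K, Kᶜ} := by
        refine ⟨?_, ?_, ?_, ?_⟩
        · intro A hA
          simp only [Finset.coe_insert, Finset.coe_singleton, Set.mem_insert_iff,
            Set.mem_singleton_iff] at hA
          rcases hA with rfl | rfl
          · exact hK
          · exact h𝒜L.1.compl_mem hK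
        · intro A hA
          simp only [Finset.mem_insert, Finset.mem_singleton] at hA
          rcases hA with rfl | rfl
          · exact hKne
          · exact hKc
        · intro A hA B hB hAB
          simp only [Finset.mem_insert, Finset.mem_singleton] at hA hB
          rcases hA with rfl | rfl <;> rcases hB with rfl | rfl
          · exact absurd rfl hAB
          · exact disjoint_compl_right
          · exact disjoint_compl_left
          · exact absurd rfl hAB
        · simp
      have hKK : Q K K = 1 := by
        have h := h1 Set.univ hf.univ_mem K hK hKne
        rw [Set.univ_inter] at h
        rw [← h]
        exact hQK.2.1
      have hKcK : Q Kᶜ K = 0 := by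
        rw [h1 Kᶜ (hf.compl_mem hKA) K hK hKne, Set.compl_inter_self]
        exact hQK.isFinAdd.empty hf
      have h := lowerSum_le_lowerSInt hH h𝒜L hX hQKL hT
      rw [← h6 F hF K hK hKne, Finset.sum_pair hKne', hKK, hKcK, mul_one, mul_zero, add_zero] at h
      exact h
  refine ⟨fun hFK => ?_, fun hFK => ⟨?_, fun hpos => ?_, hnullval⟩⟩
  · refine lowEnv_eq_of_forall ⟨P, hPfd⟩ fun Q hQ => ?_
    have h1 := hQ.1 F hF K hK hKne
    have h2 := hQ.1 Set.univ hf.univ_mem K hK hKne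
    rw [Set.univ_inter] at h2
    rw [h1, hFK, ← h2]
    exact (hQ.2.1 K hK hKne).2.1
  · rcases (hπ.1 K hK).1.eq_or_lt with hK0 | hpos
    · -- the capacity is vacuous on `K`, and the level sets containing `K` are those below the
      -- infimum
      rw [hnullval hK0.symm,
        choquetInt_congr fun B hB => lowEnv_FCPSet_null hH h𝒜L hf hsub hσ hπ hB hK hKne hK0.symm]
      obtain ⟨hc0, hc1, hcle⟩ := sInf_atoms_bounds hH h𝒜L hX hK hKne
      set c := sInf {x | ∃ i, H i ⊆ K ∧ x = σ F i} with hc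
      rw [choquetInt, ← integral_step hc0 hc1]
      congr 1
      funext t
      symm
      have hlev : K ⊆ (⋃ i ∈ {i | t ≤ σ F i}, H i) ↔ t ≤ c := by
        constructor
        · intro h
          refine le_csInf ⟨_, i₁, hi₁, rfl⟩ ?_
          rintro x ⟨i, hi, rfl⟩
          exact (atom_subset_level hH _ t i).1 (hi.trans h)
        · intro h x hx
          obtain ⟨i, hi⟩ := exists_atom_mem hH x
          have hiK := subset_of_mem hH h𝒜L hK hi hx
          exact (atom_subset_level hH _ t i).2 (h.trans (hcle i hiK)) hi
      split_ifs with htc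
      · refine IsGreatest.csSup_eq ⟨⟨K, hK, hlev.2 htc, by simp⟩, ?_⟩
        rintro y ⟨B, -, -, rfl⟩
        split_ifs <;> norm_num
      · refine IsGreatest.csSup_eq ⟨⟨∅, h𝒜L.1.empty_mem, Set.empty_subset _, ?_⟩, ?_⟩
        · rw [if_neg fun h => hKne.ne_empty (Set.subset_empty_iff.1 h)]
        · rintro y ⟨B, -, hB, rfl⟩
          rw [if_neg fun h => htc (hlev.1 (h.trans hB))]
    · -- conditioning on `K` is determined by the prior, so the capacity is additive
      have hcap : ∀ B ∈ 𝒜L, lowEnv (FCPSet 𝒜 𝒜L H π σ) B K = P B K := by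
        have hdet : ∀ B ∈ 𝒜L, ∀ Q ∈ FCPSet 𝒜 𝒜L H π σ, Q B K = π (K ∩ B) / π K := by
          intro B hB Q hQ
          have h7 := hQ.1.2.2 K hKA B (hsub hB) Set.univ hf.univ_mem huniv (by simpa using hKne)
          rw [Set.inter_univ, hQ.2.1 K hK, hQ.2.1 _ (h𝒜L.1.inter_mem hK hB)] at h7
          rw [h7, mul_div_cancel_left₀ _ hpos.ne']
        intro B hB
        refine lowEnv_eq_of_forall ⟨P, hP, hext⟩ fun Q hQ => ?_
        rw [hdet B hB Q hQ, hdet B hB P ⟨hP, hext⟩]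
      rw [choquetInt_congr hcap, choquetInt_eq_lowerSInt hH h𝒜L hX (hcont F hF) hPKL,
        ← hPfd.2.2.2.2.2 F hF K hK hKne]
      refine lowEnv_eq_of_forall ⟨P, hPfd⟩ fun Q hQ => ?_
      rw [hval hpos Q hQ, hval hpos P hPfd]
  · exact lowEnv_eq_of_forall ⟨P, hPfd⟩ (hval hpos)
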